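/- arXiv:0908.1698 — 2 statements merged into one kernel-verified Lean document; each statement's English description precedes it below -/
import Mathlib

section
/- For every d ≥ 1, every illuminated d-polytope has at least M(d) vertices. -/
open scoped RealInnerProductSpace

noncomputable section

/-- We work in `ℝ^d`, modelled as Euclidean space. -/
abbrev Euc (d : ℕ) := EuclideanSpace ℝ (Fin d)

/-- `P` is a polytope: the convex hull of a finite set of points. -/
def IsPolytope {d : ℕ} (P : Set (Euc d)) : Prop :=
  ∃ V : Set (Euc d), V.Finite ∧ P = convexHull ℝ V

/-- `P` is a `d`-polytope in `ℝ^d`: a polytope whose affine span is all of `ℝ^d`. -/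
def IsDPolytope {d : ℕ} (P : Set (Euc d)) : Prop :=
  IsPolytope P ∧ affineSpan ℝ P = ⊤

/-- The vertices of a polytope are its extreme points. -/
def verts {d : ℕ} (P : Set (Euc d)) : Set (Euc d) :=
  Set.extremePoints ℝ P

/-- `[u,v]` is an inner diagonal of `P`: `u`, `v` are distinct vertices and the
relative interior of the segment (the open segment) meets the interior of `P`. -/
def InnerDiagonal {d : ℕ} (P : Set (Euc d)) (u v : Euc d) : Prop :=
  u ∈ verts P ∧ v ∈ verts P ∧ u ≠ v ∧ (openSegment ℝ u v ∩ interior P).Nonempty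

/-- `P` is illuminated: every vertex lies on an inner diagonal. -/
def Illuminated {d : ℕ} (P : Set (Euc d)) : Prop :=
  ∀ v ∈ verts P, ∃ u, InnerDiagonal P u v

/-- A set `U` of vertices illuminates itself if every `v ∈ U` lies on an inner
diagonal `[u,v]` with `u ∈ U`. -/
def IlluminatesItself {d : ℕ} (P : Set (Euc d)) (U : Set (Euc d)) : Prop :=
  ∀ v ∈ U, ∃ u ∈ U, InnerDiagonal P u v

/-- A set `W` of vertices lies opposite the vertex `v ∉ W` if `[v,w]` is an inner
diagonal for all `w ∈ W`, and the remaining vertices illuminate themselves. -/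
def LiesOpposite {d : ℕ} (P : Set (Euc d)) (W : Set (Euc d)) (v : Euc d) : Prop :=
  v ∈ verts P ∧ W ⊆ verts P ∧ v ∉ W ∧ (∀ w ∈ W, InnerDiagonal P v w) ∧
    IlluminatesItself P (verts P \ (W ∪ {v}))

/-- `Γ(P)`: the maximum cardinality of a set lying opposite some vertex (`0` if none). -/
def Gamma {d : ℕ} (P : Set (Euc d)) : ℕ :=
  sSup {n : ℕ | ∃ W v, LiesOpposite P W v ∧ W.ncard = n}

/-- `p(d) = ⌈(√(4d+1) - 1)/2⌉`. -/
def pf (d : ℕ) : ℕ := ⌈(Real.sqrt (4 * d + 1) - 1) / 2⌉₊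

/-- `M(d) = min {2d, d + p(d) + ⌈d/p(d)⌉ + 1}`. -/
def Mf (d : ℕ) : ℕ := min (2 * d) (d + pf d + ⌈(d : ℝ) / (pf d : ℝ)⌉₊ + 1)

/-- A Mani `d`-polytope: an illuminated `d`-polytope with exactly `M(d)` vertices. -/
def IsManiPolytope {d : ℕ} (P : Set (Euc d)) : Prop :=
  IsDPolytope P ∧ Illuminated P ∧ (verts P).ncard = Mf d

/-- A facet of a `d`-polytope: an exposed face of dimension `d - 1`. -/
def IsFacetOf {d : ℕ} (P F : Set (Euc d)) : Prop :=
  IsExposed ℝ P F ∧ Module.finrank ℝ (affineSpan ℝ F).direction = d - 1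

/-- `S` is the vertex set of an (exposed) face of `P`. -/
def IsFaceVertexSet {d : ℕ} (P S : Set (Euc d)) : Prop :=
  ∃ F : Set (Euc d), IsExposed ℝ P F ∧ S = verts P ∩ F

/-- Combinatorial equivalence: a bijection of the vertex sets carrying vertex sets
of faces to vertex sets of faces in both directions. -/
def CombEquiv {d : ℕ} (P Q : Set (Euc d)) : Prop :=
  ∃ f : Euc d → Euc d, Set.BijOn f (verts P) (verts Q) ∧
    ∀ S ⊆ verts P, (IsFaceVertexSet P S ↔ IsFaceVertexSet Q (f '' S))

/-- The `d`-dimensional crosspolytope `conv {±e₁, …, ±e_d}`. -/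
def crossPolytope (d : ℕ) : Set (Euc d) :=
  convexHull ℝ
    {x | ∃ i : Fin d, x = EuclideanSpace.single i 1 ∨ x = -EuclideanSpace.single i 1}

/-- `{u, v}` is the vertex set of an edge (a `1`-dimensional exposed face) of `P`. -/
def IsEdgeVertexSet {d : ℕ} (P : Set (Euc d)) (u v : Euc d) : Prop :=
  ∃ F : Set (Euc d), IsExposed ℝ P F ∧
    Module.finrank ℝ (affineSpan ℝ F).direction = 1 ∧ Set.extremePoints ℝ F = {u, v}

/-!
Join two vertices of `P` when they span an inner diagonal. Since `P` is illuminated, this graph has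
no isolated vertex, so it has a spanning forest of stars, each with at least one leaf. On the other
hand the vertices of a facet are independent in the graph, any vertex `v` can be separated from any
other vertex `w` by a facet through `v` that misses `w`, and a facet has at least `d` vertices.

Let `v` be the centre of a star with the largest number `g` of leaves, and let there be `m` further
stars. A facet through `v` misses all leaves of `v` and at least one vertex of every other star,
whence `n ≥ d + g + m`. If every other star is a single edge, then `n = g + 1 + 2m` and `n ≥ 2d`.
Otherwise some star with centre `x ≠ v` has two leaves, and a facet through `v` that misses a leaf
of `x` misses two vertices of that star. This improves the bound to `n ≥ d + g + m + 1`. Together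
with `n ≤ (m + 1)(g + 1)` it yields `d ≤ mg`, and under this constraint `g + m` is at least
`p(d) + ⌈d/p(d)⌉`.
-/

open Finset Module

/-! ### The function `M` -/

lemma pf_le_iff {d k : ℕ} : pf d ≤ k ↔ d ≤ k * (k + 1) := by
  have hsq : Real.sqrt (4 * d + 1) ≤ 2 * k + 1 ↔ (4 * d + 1 : ℝ) ≤ (2 * k + 1) ^ 2 :=
    Real.sqrt_le_left (by positivity)
  calc pf d ≤ k ↔ (Real.sqrt (4 * d + 1) - 1) / 2 ≤ k := Nat.ceil_le
    _ ↔ Real.sqrt (4 * d + 1) ≤ 2 * k + 1 := by constructor <;> intro h <;> linarith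
    _ ↔ (d : ℝ) ≤ k * (k + 1) := by rw [hsq]; constructor <;> intro h <;> linarith
    _ ↔ d ≤ k * (k + 1) := by norm_cast

lemma pf_le_add_and_le_pf_mul_sub {d g m : ℕ} (h : d ≤ m * g) :
    pf d ≤ m + g ∧ d ≤ pf d * (m + g - pf d) := by
  have hp : d ≤ pf d * (pf d + 1) := pf_le_iff.1 le_rfl
  have not_both_lt : ¬ (m < pf d ∧ g < pf d) := by
    rintro ⟨hm, hg⟩
    have : pf d ≤ pf d - 1 := pf_le_iff.2 <| h.trans <|
      Nat.mul_le_mul (by omega) (by omega)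
    omega
  have hsum : pf d ≤ m + g := by omega
  refine ⟨hsum, ?_⟩
  obtain ⟨q, hq⟩ := Nat.exists_eq_add_of_le hsum
  rw [hq, Nat.add_sub_cancel_left]
  by_cases hlt : pf d < m ∧ pf d < g
  · exact hp.trans (Nat.mul_le_mul_left _ (by omega))
  · have hprod : 0 ≤ ((pf d : ℤ) - m) * (g - pf d) := by
      rcases (by omega : (m ≤ pf d ∧ pf d ≤ g) ∨ (g ≤ pf d ∧ pf d ≤ m)) with ⟨h₁, h₂⟩ | ⟨h₁, h₂⟩
      · exact mul_nonneg (by omega) (by omega)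
      · exact mul_nonneg_of_nonpos_of_nonpos (by omega) (by omega)
    have hq : (m : ℤ) + g = pf d + q := by exact_mod_cast hq
    zify at h ⊢
    linear_combination h + hprod + (pf d : ℤ) * hq

lemma Mf_le_of_le_mul {d g m n : ℕ} (h : d ≤ m * g) (hn : d + g + m + 1 ≤ n) : Mf d ≤ n := by
  obtain ⟨hsum, hmul⟩ := pf_le_add_and_le_pf_mul_sub h
  have hceil : ⌈(d : ℝ) / pf d⌉₊ ≤ m + g - pf d := by
    rw [Nat.ceil_le]
    refine div_le_of_le_mul₀ (by positivity) (by positivity) ?_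
    rw [mul_comm]
    exact_mod_cast hmul
  exact (min_le_right _ _).trans (by omega)

/-! ### Star forests -/

/-- A spanning star forest of `G`, encoded by the map `c` that sends each vertex to the centre of
its star. The centres are the fixed points of `c`, and every star has at least one leaf. -/
structure IsStarForest {V : Type*} (G : SimpleGraph V) (c : V → V) : Prop where
  idem : ∀ u, c (c u) = c u
  adj : ∀ u, c u ≠ u → G.Adj (c u) u
  exists_leaf : ∀ x, c x = x → ∃ u, u ≠ x ∧ c u = x

section Existence

variable {V : Type*} [Finite V] {G : SimpleGraph V}

lemma exists_le_forall_adj_neighborSet_subsingleton (hG : ∀ v, ¬ G.IsIsolated v) :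
    ∃ H ≤ G, (∀ v, ¬ H.IsIsolated v) ∧
      ∀ u v, H.Adj u v → (H.neighborSet u).Subsingleton ∨ (H.neighborSet v).Subsingleton := by
  obtain ⟨H, hHG, hH⟩ := exists_minimal_le_of_wellFoundedLT
    (fun H : SimpleGraph V ↦ ∀ v, ¬ H.IsIsolated v) G hG
  refine ⟨H, hHG, hH.prop, fun u v huv ↦ ?_⟩
  have hdel : ∃ x, (H.deleteEdges {s(u, v)}).IsIsolated x := by
    by_contra! hcon
    have : (H.deleteEdges {s(u, v)}).Adj u v := hH.le_of_le hcon (H.deleteEdges_le _) huv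
    simp at this
  obtain ⟨x, hx⟩ := hdel
  have hx_edge : ∀ y, H.Adj x y → s(x, y) = s(u, v) := by
    intro y hxy
    by_contra hne
    exact hx y (SimpleGraph.deleteEdges_adj.2 ⟨hxy, hne⟩)
  obtain ⟨y, hxy⟩ := SimpleGraph.exists_adj_iff_not_isIsolated.2 (hH.prop x)
  have hsub : (H.neighborSet x).Subsingleton := fun a ha b hb ↦
    Sym2.congr_right.1 ((hx_edge a ha).trans (hx_edge b hb).symm)
  rcases Sym2.eq_iff.1 (hx_edge y hxy) with ⟨rfl, -⟩ | ⟨rfl, -⟩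
  exacts [.inl hsub, .inr hsub]

theorem exists_isStarForest (hG : ∀ v, ¬ G.IsIsolated v) : ∃ c, IsStarForest G c := by
  classical
  obtain ⟨H, hHG, hH, hedge⟩ := exists_le_forall_adj_neighborSet_subsingleton hG
  choose n hn using fun v ↦ SimpleGraph.exists_adj_iff_not_isIsolated.2 (hH v)
  -- The leaves: independence picks only one end of a component that is a single edge.
  obtain ⟨L, hL⟩ := (Set.toFinite
    {L : Set V | H.IsIndepSet L ∧ ∀ u ∈ L, (H.neighborSet u).Subsingleton}).exists_maximal
    ⟨∅, by simp⟩
  obtain ⟨hLind, hLsub⟩ := hL.prop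
  have n_notMem : ∀ u ∈ L, n u ∉ L := fun u hu hnu ↦ hLind hu hnu (hn u).ne (hn u)
  have exists_adj_of_notMem : ∀ u ∉ L, (H.neighborSet u).Subsingleton → ∃ v ∈ L, H.Adj u v := by
    intro u hu hsub
    by_contra! hcon
    refine hu (hL.le_of_ge (y := insert u L) ⟨?_, ?_⟩ (Set.subset_insert u L) (by simp))
    · exact hLind.insert fun v hv _ ↦ ⟨hcon v hv, fun h ↦ hcon v hv h.symm⟩
    · simpa [hsub] using hLsub
  refine ⟨fun u ↦ if u ∈ L then n u else u, fun u ↦ ?_, fun u hu ↦ ?_, fun x hx ↦ ?_⟩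
  · by_cases hu : u ∈ L <;> simp [hu, n_notMem]
  · have huL : u ∈ L := by by_contra h; simp [h] at hu
    simpa [huL] using hHG (hn u).symm
  · have hxL : x ∉ L := fun h ↦ (hn x).ne (by simpa [h] using hx.symm)
    obtain ⟨u, huL, hxu⟩ : ∃ u ∈ L, H.Adj x u := by
      by_cases hsub : (H.neighborSet x).Subsingleton
      · exact exists_adj_of_notMem x hxL hsub
      refine ⟨n x, ?_, hn x⟩
      have hsub' := (hedge x (n x) (hn x)).resolve_left hsub
      by_contra hnL
      obtain ⟨v, hvL, hv⟩ := exists_adj_of_notMem _ hnL hsub'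
      obtain rfl : v = x := hsub' hv (hn x).symm
      exact hxL hvL
    exact ⟨u, hxu.ne', by simpa [huL] using hLsub u huL (hn u) hxu.symm⟩

end Existence

section Counting

variable {V : Type*} [Fintype V] [DecidableEq V] {G : SimpleGraph V} {c : V → V} {v x : V}
  {F : Finset V}

/-- The centres of the stars encoded by `c`, see `IsStarForest`. -/
def starCenters (c : V → V) : Finset V := {x | c x = x}

/-- The vertices, including the centre, of the star with centre `x` encoded by `c`. -/
def starVertices (c : V → V) (x : V) : Finset V := {u | c u = x}

/-- The leaves of the star with centre `x` encoded by `c`. -/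
def starLeaves (c : V → V) (x : V) : Finset V := (starVertices c x).erase x

lemma mem_starVertices_self (hx : x ∈ starCenters c) : x ∈ starVertices c x := by
  simpa [starCenters, starVertices] using hx

lemma card_starVertices (hx : x ∈ starCenters c) :
    #(starVertices c x) = #(starLeaves c x) + 1 :=
  (card_erase_add_one (mem_starVertices_self hx)).symm

lemma ne_of_mem_starLeaves (hv : v ∈ starCenters c) {u : V}
    (hu : u ∈ starLeaves c x) : v ≠ u := by
  rintro rfl
  obtain ⟨hvx, hcv⟩ : v ≠ x ∧ c v = x := by simpa [starLeaves, starVertices] using hu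
  exact hvx ((mem_filter.1 hv).2.symm.trans hcv)

namespace IsStarForest

lemma apply_mem_starCenters (hc : IsStarForest G c) (u : V) : c u ∈ starCenters c := by
  simp [starCenters, hc.idem]

lemma starLeaves_nonempty (hc : IsStarForest G c) (hx : x ∈ starCenters c) :
    (starLeaves c x).Nonempty := by
  obtain ⟨u, hux, hu⟩ := hc.exists_leaf x (by simpa [starCenters] using hx)
  exact ⟨u, by simp [starLeaves, starVertices, hux, hu]⟩

lemma adj_of_mem_starLeaves (hc : IsStarForest G c) {u : V} (hu : u ∈ starLeaves c x) :
    G.Adj x u := by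
  obtain ⟨hux, rfl⟩ : u ≠ x ∧ c u = x := by simpa [starLeaves, starVertices] using hu
  exact hc.adj u hux.symm

lemma card_add_sum_card_sdiff (hc : IsStarForest G c) (F : Finset V) :
    #F + ∑ x ∈ starCenters c, #(starVertices c x \ F) = Fintype.card V := by
  have hcompl : #Fᶜ = ∑ x ∈ starCenters c, #(starVertices c x \ F) := by
    rw [card_eq_sum_card_fiberwise fun u _ ↦ hc.apply_mem_starCenters u]
    refine sum_congr rfl fun x _ ↦ congrArg _ ?_
    ext u
    simp [starVertices, and_comm]
  rw [← hcompl, card_add_card_compl]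

lemma sum_card_starLeaves_add_one (hc : IsStarForest G c) :
    ∑ x ∈ starCenters c, (#(starLeaves c x) + 1) = Fintype.card V := by
  rw [← hc.card_add_sum_card_sdiff ∅, card_empty, zero_add]
  exact sum_congr rfl fun x hx ↦ by rw [sdiff_empty, card_starVertices hx]

lemma starLeaves_subset_sdiff (hc : IsStarForest G c) (hF : G.IsIndepSet F) (hx : x ∈ F) :
    starLeaves c x ⊆ starVertices c x \ F := by
  intro u hu
  have hadj := hc.adj_of_mem_starLeaves hu
  exact mem_sdiff.2 ⟨mem_of_mem_erase hu, fun huF ↦ hF hx huF hadj.ne hadj⟩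

lemma one_le_card_sdiff (hc : IsStarForest G c) (hF : G.IsIndepSet F) (hx : x ∈ starCenters c) :
    1 ≤ #(starVertices c x \ F) := by
  by_cases hxF : x ∈ F
  · exact ((hc.starLeaves_nonempty hx).mono (hc.starLeaves_subset_sdiff hF hxF)).card_pos
  · exact card_pos.2 ⟨x, mem_sdiff.2 ⟨mem_starVertices_self hx, hxF⟩⟩

lemma two_le_card_sdiff (hc : IsStarForest G c) (hF : G.IsIndepSet F) (hx : x ∈ starCenters c)
    (hx₂ : 2 ≤ #(starLeaves c x)) {w : V} (hw : w ∈ starLeaves c x) (hwF : w ∉ F) :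
    2 ≤ #(starVertices c x \ F) := by
  by_cases hxF : x ∈ F
  · exact hx₂.trans (card_le_card (hc.starLeaves_subset_sdiff hF hxF))
  · obtain ⟨hwx, hw⟩ := mem_erase.1 hw
    exact one_lt_card.2 ⟨w, mem_sdiff.2 ⟨hw, hwF⟩, x,
      mem_sdiff.2 ⟨mem_starVertices_self hx, hxF⟩, hwx⟩

lemma card_add_card_starLeaves_add_sum_le (hc : IsStarForest G c) (hF : G.IsIndepSet F)
    (hv : v ∈ starCenters c) (hvF : v ∈ F) :
    #F + #(starLeaves c v) + ∑ x ∈ (starCenters c).erase v, #(starVertices c x \ F)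
      ≤ Fintype.card V := by
  rw [← hc.card_add_sum_card_sdiff F, ← add_sum_erase _ _ hv, add_assoc]
  gcongr
  exact hc.starLeaves_subset_sdiff hF hvF

lemma card_add_card_starLeaves_add_card_le (hc : IsStarForest G c) (hF : G.IsIndepSet F)
    (hv : v ∈ starCenters c) (hvF : v ∈ F) :
    #F + #(starLeaves c v) + #((starCenters c).erase v) ≤ Fintype.card V := by
  refine le_trans ?_ (hc.card_add_card_starLeaves_add_sum_le hF hv hvF)
  rw [card_eq_sum_ones (erase _ _)]
  gcongr with x hx
  exact hc.one_le_card_sdiff hF (mem_of_mem_erase hx)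

lemma card_add_card_starLeaves_add_card_lt (hc : IsStarForest G c) (hF : G.IsIndepSet F)
    (hv : v ∈ starCenters c) (hvF : v ∈ F) (hx : x ∈ (starCenters c).erase v)
    (hx₂ : 2 ≤ #(starLeaves c x)) {w : V} (hw : w ∈ starLeaves c x) (hwF : w ∉ F) :
    #F + #(starLeaves c v) + #((starCenters c).erase v) < Fintype.card V := by
  refine lt_of_lt_of_le ?_ (hc.card_add_card_starLeaves_add_sum_le hF hv hvF)
  rw [card_eq_sum_ones (erase _ _)]
  refine add_lt_add_right ?_ _
  exact sum_lt_sum (fun z hz ↦ hc.one_le_card_sdiff hF (mem_of_mem_erase hz))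
    ⟨x, hx, hc.two_le_card_sdiff hF (mem_of_mem_erase hx) hx₂ hw hwF⟩

lemma card_le_of_forall_card_starLeaves_le (hc : IsStarForest G c) (hv : v ∈ starCenters c) {k : ℕ}
    (hk : ∀ x ∈ (starCenters c).erase v, #(starLeaves c x) ≤ k) :
    Fintype.card V ≤ #(starLeaves c v) + 1 + #((starCenters c).erase v) * (k + 1) := by
  rw [← hc.sum_card_starLeaves_add_one, ← add_sum_erase _ _ hv]
  gcongr
  exact sum_le_card_nsmul _ _ _ fun x hx ↦ Nat.succ_le_succ (hk x hx)

end IsStarForest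

end Counting

theorem two_mul_le_card_or_exists_le_mul {V : Type*} [Finite V] [Nonempty V] {G : SimpleGraph V}
    {d : ℕ} (hG : ∀ v, ¬ G.IsIsolated v)
    (hfacet : ∀ v w, v ≠ w → ∃ F : Set V, v ∈ F ∧ w ∉ F ∧ d ≤ F.ncard ∧ G.IsIndepSet F) :
    2 * d ≤ Nat.card V ∨ ∃ g m, d ≤ m * g ∧ d + g + m + 1 ≤ Nat.card V := by
  classical
  have := Fintype.ofFinite V
  rw [Nat.card_eq_fintype_card]
  obtain ⟨c, hc⟩ := exists_isStarForest hG
  obtain ⟨v, hv, hmax⟩ := exists_max_image (starCenters c) (fun x ↦ #(starLeaves c x))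
    ⟨_, hc.apply_mem_starCenters (Classical.arbitrary V)⟩
  set g := #(starLeaves c v)
  set m := #((starCenters c).erase v)
  by_cases hbig : ∃ x ∈ (starCenters c).erase v, 2 ≤ #(starLeaves c x)
  · obtain ⟨x, hx, hx₂⟩ := hbig
    obtain ⟨w, hw⟩ := hc.starLeaves_nonempty (mem_of_mem_erase hx)
    obtain ⟨F, hvF, hwF, hdF, hF⟩ := hfacet v w (ne_of_mem_starLeaves hv hw)
    lift F to Finset V using F.toFinite
    rw [Set.ncard_coe_finset] at hdF
    have hlower : #F + g + m < Fintype.card V :=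
      hc.card_add_card_starLeaves_add_card_lt hF hv hvF hx hx₂ hw hwF
    have hupper : Fintype.card V ≤ g + 1 + m * (g + 1) :=
      hc.card_le_of_forall_card_starLeaves_le hv fun x hx ↦ hmax x (mem_of_mem_erase hx)
    refine .inr ⟨g, m, ?_, by omega⟩
    linarith
  · push Not at hbig
    obtain ⟨w, hw⟩ := hc.starLeaves_nonempty hv
    have hg : 1 ≤ g := card_pos.2 ⟨w, hw⟩
    obtain ⟨F, hvF, -, hdF, hF⟩ := hfacet v w (ne_of_mem_starLeaves hv hw)
    lift F to Finset V using F.toFinite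
    rw [Set.ncard_coe_finset] at hdF
    have hlower : #F + g + m ≤ Fintype.card V :=
      hc.card_add_card_starLeaves_add_card_le hF hv hvF
    have hupper : Fintype.card V ≤ g + 1 + m * 2 :=
      hc.card_le_of_forall_card_starLeaves_le hv fun x hx ↦ Nat.le_of_lt_succ (hbig x hx)
    omega

/-! ### Extremal nonnegative functionals -/

lemma exists_forall_nonneg_add_mul_and_eq_zero {ι 𝕜 : Type*} [Finite ι] [Field 𝕜] [LinearOrder 𝕜]
    [IsStrictOrderedRing 𝕜] {a b : ι → 𝕜} (ha : ∀ i, 0 ≤ a i) (hb : ∃ i, b i < 0) :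
    ∃ t, (∀ i, 0 ≤ a i + t * b i) ∧ ∃ i, b i < 0 ∧ a i + t * b i = 0 := by
  obtain ⟨j, hj, hmin⟩ := (Set.toFinite {i | b i < 0}).exists_minimalFor (fun i ↦ a i / -b i) _ hb
  have hj : b j < 0 := hj
  have ht : 0 ≤ a j / -b j := div_nonneg (ha j) (by linarith)
  refine ⟨a j / -b j, fun i ↦ ?_, j, hj, by field_simp [hj.ne]; ring⟩
  rcases lt_or_ge (b i) 0 with hi | hi
  · have hle : a j / -b j ≤ a i / -b i := (le_total _ _).elim id (hmin hi)
    rw [le_div_iff₀ (by linarith)] at hle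
    linarith
  · exact add_nonneg (ha i) (mul_nonneg ht hi)

section Dual

variable {ι 𝕜 E : Type*} [Field 𝕜] [LinearOrder 𝕜] [IsStrictOrderedRing 𝕜] [AddCommGroup E]
  [Module 𝕜 E] {y : ι → E} {x : E}

lemma exists_dual_neg_of_span_ne_top (hy : Submodule.span 𝕜 (Set.range y) = ⊤) {s : Set E}
    (hs : Submodule.span 𝕜 s ≠ ⊤) :
    ∃ f : Dual 𝕜 E, (∀ z ∈ s, f z = 0) ∧ ∃ i, f (y i) < 0 := by
  obtain ⟨f, hf, hker⟩ := Submodule.exists_le_ker_of_lt_top _ hs.lt_top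
  have hfs : ∀ z ∈ s, f z = 0 := fun z hz ↦ hker (Submodule.subset_span hz)
  obtain ⟨i, hi⟩ : ∃ i, f (y i) ≠ 0 := by
    by_contra! hcon
    exact hf (LinearMap.ext_on_range hy (by simpa using hcon))
  rcases hi.lt_or_gt with hi | hi
  · exact ⟨f, hfs, i, hi⟩
  · exact ⟨-f, by simpa using hfs, i, by simpa using hi⟩

lemma exists_dual_setOf_eq_zero_ssubset [Finite ι] (hy : Submodule.span 𝕜 (Set.range y) = ⊤)
    {c : Dual 𝕜 E} (hc : ∀ i, 0 ≤ c (y i))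
    (hspan : Submodule.span 𝕜 (insert x (y '' {i | c (y i) = 0})) ≠ ⊤) :
    ∃ c' : Dual 𝕜 E, (∀ i, 0 ≤ c' (y i)) ∧ c' x = c x ∧
      {i | c (y i) = 0} ⊂ {i | c' (y i) = 0} := by
  obtain ⟨f, hf, hneg⟩ := exists_dual_neg_of_span_ne_top hy hspan
  have hfx : f x = 0 := hf x (Set.mem_insert _ _)
  have hf₀ : ∀ i, c (y i) = 0 → f (y i) = 0 := fun i hi ↦ hf _ (.inr ⟨i, hi, rfl⟩)
  obtain ⟨t, ht, j, hj, htj⟩ := exists_forall_nonneg_add_mul_and_eq_zero hc hneg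
  refine ⟨c + t • f, by simpa using ht, by simp [hfx], fun i hi ↦ ?_, fun hsub ↦ ?_⟩
  · have hi : c (y i) = 0 := hi
    simp [hi, hf₀ i hi]
  · exact hj.ne (hf₀ j (hsub (by simpa using htj)))

theorem exists_dual_span_insert_eq_top [Finite ι] (hy : Submodule.span 𝕜 (Set.range y) = ⊤)
    {c₀ : Dual 𝕜 E} (hc₀ : ∀ i, 0 ≤ c₀ (y i)) (hx : 0 < c₀ x) :
    ∃ c : Dual 𝕜 E, (∀ i, 0 ≤ c (y i)) ∧ 0 < c x ∧
      Submodule.span 𝕜 (insert x (y '' {i | c (y i) = 0})) = ⊤ := by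
  obtain ⟨c, ⟨hc, hcx⟩, hmax⟩ := Set.Finite.exists_maximalFor'
    (fun c : Dual 𝕜 E ↦ {i | c (y i) = 0}) {c | (∀ i, 0 ≤ c (y i)) ∧ 0 < c x}
    (Set.toFinite _) ⟨c₀, hc₀, hx⟩
  refine ⟨c, hc, hcx, ?_⟩
  by_contra hspan
  obtain ⟨c', hc', hc'x, hlt⟩ := exists_dual_setOf_eq_zero_ssubset hy hc hspan
  exact hlt.not_subset (hmax ⟨hc', hc'x ▸ hcx⟩ hlt.subset)

end Dual

lemma finrank_le_ncard_of_span_insert_image_eq_top {ι 𝕜 E : Type*} [DivisionRing 𝕜]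
    [AddCommGroup E] [Module 𝕜 E] {y : ι → E} {x : E} {T : Set ι} (hT : T.Finite)
    (hspan : Submodule.span 𝕜 (insert x (y '' T)) = ⊤) {i : ι} (hi : i ∈ T) (hyi : y i = 0) :
    finrank 𝕜 E ≤ T.ncard := by
  classical
  lift T to Finset ι using hT
  let W : Finset E := insert x (T.image y)
  have hW : Submodule.span 𝕜 (W.erase 0 : Set E) = ⊤ := by
    simpa [W, Submodule.span_sdiff_singleton_zero] using hspan
  have hzero : (0 : E) ∈ W := mem_insert_of_mem (mem_image.2 ⟨i, hi, hyi⟩)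
  calc finrank 𝕜 E = (W.erase 0 : Set E).finrank 𝕜 := by rw [Set.finrank, hW, finrank_top]
    _ ≤ #(W.erase 0) := finrank_span_finset_le_card _
    _ = #W - 1 := card_erase_of_mem hzero
    _ ≤ #(T.image y) := Nat.sub_le_of_le_add (card_insert_le _ _)
    _ ≤ #T := card_image_le
    _ = (T : Set ι).ncard := (Set.ncard_coe_finset T).symm

/-! ### Polytopes -/

section ConvexHull

variable {E : Type*} [AddCommGroup E] [Module ℝ E] [TopologicalSpace E] [T2Space E]
  [IsTopologicalAddGroup E] [ContinuousSMul ℝ E] [LocallyConvexSpace ℝ E] {s : Set E}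

lemma convexHull_extremePoints_convexHull_of_finite (hs : s.Finite) :
    convexHull ℝ ((convexHull ℝ s).extremePoints ℝ) = convexHull ℝ s := by
  have hclosed : IsClosed (convexHull ℝ ((convexHull ℝ s).extremePoints ℝ)) :=
    (hs.subset extremePoints_convexHull_subset).isClosed_convexHull ℝ
  rw [← hclosed.closure_eq]
  exact closure_convexHull_extremePoints (hs.isCompact_convexHull ℝ) (convex_convexHull ℝ s)

lemma exists_forall_lt_of_mem_extremePoints_convexHull (hs : s.Finite) {v : E}
    (hv : v ∈ (convexHull ℝ s).extremePoints ℝ) :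
    ∃ c : StrongDual ℝ E, ∀ u ∈ s, u ≠ v → c u < c v := by
  have hnot : v ∉ convexHull ℝ (s \ {v}) := fun hmem ↦
    ((convex_convexHull ℝ s).mem_extremePoints_iff_mem_sdiff_convexHull_sdiff.1 hv).2
      (convexHull_mono (Set.sdiff_subset_sdiff_left (subset_convexHull ℝ s)) hmem)
  obtain ⟨c, r, hlt, hr⟩ := geometric_hahn_banach_closed_point (convex_convexHull ℝ (s \ {v}))
    ((hs.subset Set.sdiff_subset).isClosed_convexHull ℝ) hnot
  exact ⟨c, fun u hu huv ↦ (hlt u (subset_convexHull ℝ _ ⟨hu, huv⟩)).trans hr⟩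

end ConvexHull

lemma notMem_interior_of_isMaxOn {E : Type*} [NormedAddCommGroup E] [NormedSpace ℝ E] {s : Set E}
    {z : E} {c : StrongDual ℝ E} (hc : c ≠ 0) (hmax : IsMaxOn c s z) : z ∉ interior s := fun hz ↦
  hc <| (hmax.isLocalMax (mem_interior_iff_mem_nhds.1 hz)).hasFDerivAt_eq_zero c.hasFDerivAt

variable {d : ℕ} {P : Set (Euc d)}

lemma IsPolytope.finite_verts (hP : IsPolytope P) : (verts P).Finite := by
  obtain ⟨V, hV, rfl⟩ := hP
  exact hV.subset extremePoints_convexHull_subset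

lemma IsPolytope.convexHull_verts (hP : IsPolytope P) : convexHull ℝ (verts P) = P := by
  obtain ⟨V, hV, rfl⟩ := hP
  exact convexHull_extremePoints_convexHull_of_finite hV

lemma IsPolytope.exists_forall_lt (hP : IsPolytope P) {v : Euc d} (hv : v ∈ verts P) :
    ∃ c : StrongDual ℝ (Euc d), ∀ u ∈ verts P, u ≠ v → c u < c v := by
  obtain ⟨V, hV, rfl⟩ := hP
  obtain ⟨c, hc⟩ := exists_forall_lt_of_mem_extremePoints_convexHull hV hv
  exact ⟨c, fun u hu ↦ hc u (extremePoints_convexHull_subset hu)⟩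

lemma IsPolytope.isMaxOn_of_forall_verts_le (hP : IsPolytope P) {c : StrongDual ℝ (Euc d)}
    {v : Euc d} (h : ∀ u ∈ verts P, c u ≤ c v) : IsMaxOn c P v := by
  rw [← hP.convexHull_verts]
  exact convexHull_min h (convex_halfSpace_le c.isLinear (c v))

lemma IsDPolytope.affineSpan_verts (hP : IsDPolytope P) : affineSpan ℝ (verts P) = ⊤ := by
  rw [← affineSpan_convexHull, hP.1.convexHull_verts, hP.2]

lemma IsDPolytope.verts_nonempty (hP : IsDPolytope P) : (verts P).Nonempty := by
  rw [← affineSpan_nonempty ℝ, hP.affineSpan_verts]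
  exact Set.univ_nonempty

lemma IsDPolytope.span_range_sub_eq_top (hP : IsDPolytope P) {v : Euc d} (hv : v ∈ verts P) :
    Submodule.span ℝ (Set.range fun u : verts P ↦ v - u) = ⊤ := by
  have h := vectorSpan_eq_span_vsub_set_left ℝ hv
  rw [← direction_affineSpan, hP.affineSpan_verts, AffineSubspace.direction_top,
    Set.image_eq_range] at h
  exact h.symm

lemma InnerDiagonal.symm {u v : Euc d} (h : InnerDiagonal P u v) : InnerDiagonal P v u :=
  ⟨h.2.1, h.1, h.2.2.1.symm, openSegment_symm ℝ u v ▸ h.2.2.2⟩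

/-- The graph on the vertices of `P` whose edges are the inner diagonals. -/
def diagonalGraph (P : Set (Euc d)) : SimpleGraph (verts P) where
  Adj u v := InnerDiagonal P u v
  symm := ⟨fun _ _ ↦ InnerDiagonal.symm⟩
  loopless := ⟨fun _ h ↦ h.2.2.1 rfl⟩

lemma Illuminated.not_isIsolated_diagonalGraph (h : Illuminated P) (v : verts P) :
    ¬ (diagonalGraph P).IsIsolated v := by
  obtain ⟨u, hu⟩ := h v v.2
  exact fun hv ↦ hv ⟨u, hu.1⟩ hu.symm

lemma isIndepSet_diagonalGraph_of_isMaxOn {c : StrongDual ℝ (Euc d)} (hc : c ≠ 0) {v : Euc d}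
    (hmax : IsMaxOn c P v) : (diagonalGraph P).IsIndepSet {u | c u = c v} := by
  rintro a ha b hb - ⟨-, -, -, z, hz, hzP⟩
  have hcz : c z = c v := by
    obtain ⟨s, t, -, -, hst, rfl⟩ := hz
    rw [map_add, map_smul, map_smul, ha, hb, ← add_smul, hst, one_smul]
  exact notMem_interior_of_isMaxOn hc (fun x hx ↦ hcz ▸ hmax hx) hzP

/-- The set `F` is the vertex set of a facet: a functional exposing `v` is tilted until it attains
its maximum on a facet, without ever attaining it at `w`. -/
theorem IsDPolytope.exists_isIndepSet_diagonalGraph (hP : IsDPolytope P)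
    {v w : verts P} (hvw : v ≠ w) :
    ∃ F : Set (verts P), v ∈ F ∧ w ∉ F ∧ d ≤ F.ncard ∧ (diagonalGraph P).IsIndepSet F := by
  have : Finite (verts P) := hP.1.finite_verts
  obtain ⟨c₀, hc₀⟩ := hP.1.exists_forall_lt v.2
  have hc₀_nonneg : ∀ u : verts P, 0 ≤ c₀ (v - u) := fun u ↦ by
    rcases eq_or_ne u v with rfl | huv
    · simp
    · simpa using (hc₀ u u.2 (Subtype.coe_ne_coe.2 huv)).le
  have hc₀_pos : 0 < c₀ (v - w) := by simpa using hc₀ w w.2 (Subtype.coe_ne_coe.2 hvw.symm)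
  obtain ⟨c, hc, hcw, hspan⟩ := exists_dual_span_insert_eq_top (hP.span_range_sub_eq_top v.2)
    (c₀ := c₀.toLinearMap) hc₀_nonneg hc₀_pos
  let F : Set (verts P) := {u | c (v - u) = 0}
  have hvF : v ∈ F := by simp [F]
  have hcard : d ≤ F.ncard := by
    simpa using finrank_le_ncard_of_span_insert_image_eq_top F.toFinite hspan hvF (sub_self _)
  let c' : StrongDual ℝ (Euc d) := LinearMap.toContinuousLinearMap c
  have hc' : c' ≠ 0 := fun h ↦ hcw.ne' (DFunLike.congr_fun h (v - w : Euc d))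
  have hmax : IsMaxOn c' P v :=
    hP.1.isMaxOn_of_forall_verts_le fun u hu ↦ by simpa [c'] using hc ⟨u, hu⟩
  refine ⟨F, hvF, hcw.ne', hcard, (isIndepSet_diagonalGraph_of_isMaxOn hc' hmax).mono fun u hu ↦ ?_⟩
  exact (sub_eq_zero.1 ((map_sub c _ _).symm.trans hu)).symm

/-- For `d ≥ 1`, every illuminated `d`-polytope has at least
`M(d)` vertices. -/
theorem illuminated_card_ge_M {d : ℕ} (hd : 1 ≤ d) (P : Set (Euc d))
    (hP : IsDPolytope P) (hIll : Illuminated P) :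
    Mf d ≤ (verts P).ncard := by
  have : Finite (verts P) := hP.1.finite_verts
  have : Nonempty (verts P) := hP.verts_nonempty.to_subtype
  rw [← Nat.card_coe_set_eq]
  rcases two_mul_le_card_or_exists_le_mul hIll.not_isIsolated_diagonalGraph
    (fun _ _ ↦ hP.exists_isIndepSet_diagonalGraph) with h | ⟨g, m, hgm, h⟩
  · exact (min_le_left _ _).trans h
  · exact Mf_le_of_le_mul hgm h
end
end

section
/- For every d ≥ 1 there exists an illuminated d-polytope with exactly M(d) vertices. -/
open scoped RealInnerProductSpace

noncomputable section

/-!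
If `2 * d` is the minimum, the crosspolytope will do. Otherwise the polytope is built through Gale
duality: every space of vectors in `ℝ^n` with coordinate sum zero that has dimension `n - d - 1` is
the space of affine dependences of `n` points spanning `ℝ^d`. The points are in convex position if
no nonzero dependence is nonnegative off a single index, and the segment between two of them is an
inner diagonal as soon as some dependence is positive off their two indices.

The dependences are chosen so that the inner diagonals contain a forest of stars covering all
indices: with `q = ⌈d / p(d)⌉` there are `p(d)` stars with `q` leaves and one with at most `q`
leaves, `d + q` leaves and `p(d) + 1` centers altogether.
-/

section PointFamilies

variable {ι E : Type*} [Fintype ι] [AddCommGroup E] [Module ℝ E]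

/-- The homogenization of a point family: the linear map `w ↦ (∑ i, w i • x i, ∑ i, w i)`. It is
surjective exactly when the family affinely spans the space, and its kernel consists of the affine
dependences of the family. -/
def homogenization (x : ι → E) : (ι → ℝ) →ₗ[ℝ] E × ℝ :=
  Fintype.linearCombination ℝ fun i => (x i, (1 : ℝ))

/-- The space of affine dependences of a point family, the row space of its Gale transform. -/
def affineDependences (x : ι → E) : Submodule ℝ (ι → ℝ) :=
  LinearMap.ker (homogenization x)

lemma homogenization_apply (x : ι → E) (w : ι → ℝ) :
    homogenization x w = (∑ i, w i • x i, ∑ i, w i) := by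
  simp [homogenization, Fintype.linearCombination_apply, Prod.ext_iff, Prod.fst_sum, Prod.snd_sum]

lemma mem_affineDependences {x : ι → E} {a : ι → ℝ} :
    a ∈ affineDependences x ↔ ∑ i, a i • x i = 0 ∧ ∑ i, a i = 0 := by
  rw [affineDependences, LinearMap.mem_ker, homogenization_apply, Prod.mk_eq_zero]

lemma convexIndependent_of_affineDependences {x : ι → E}
    (hx : ∀ a ∈ affineDependences x, ∀ i, (∀ j ≠ i, 0 ≤ a j) → a = 0) :
    ConvexIndependent ℝ x := by
  classical
  refine convexIndependent_iff_notMem_convexHull_sdiff.2 fun i s hi => ?_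
  let C : Set (ι → ℝ) := stdSimplex ℝ ι ∩ {w | w i = 0}
  have hC : Convex ℝ C :=
    (convex_stdSimplex ℝ ι).inter (convex_hyperplane (LinearMap.proj i).isLinear 0)
  have hsub : convexHull ℝ (x '' (s \ {i})) ⊆ Fintype.linearCombination ℝ x '' C := by
    refine convexHull_min ?_ (hC.linear_image _)
    rintro _ ⟨j, hj, rfl⟩
    refine ⟨Pi.single j 1, ⟨single_mem_stdSimplex ℝ j, ?_⟩, ?_⟩
    · simp [Ne.symm hj.2]
    · simp
  obtain ⟨w, ⟨⟨hw0, hw1⟩, hwi⟩, hwx⟩ := hsub hi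
  rw [Fintype.linearCombination_apply] at hwx
  have hdep : w - Pi.single i 1 ∈ affineDependences x := by
    refine mem_affineDependences.2 ⟨?_, ?_⟩
    · simp [sub_smul, Finset.sum_sub_distrib, hwx, Pi.single_apply, ite_smul]
    · simp [Finset.sum_sub_distrib, hw1]
  have hzero := congrFun (hx _ hdep i fun j hj => by simpa [hj] using hw0 j) i
  have hwi : w i = 0 := hwi
  simp [hwi] at hzero

/-- Adding a small multiple of `a` to the weights `1 / 2` at `i` and `j` does not change the point
but makes all weights positive. -/
lemma exists_pos_sum_smul_eq_midpoint {x : ι → E} {i j : ι} (hij : i ≠ j) {a : ι → ℝ}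
    (ha : a ∈ affineDependences x) (hpos : ∀ k, k ≠ i → k ≠ j → 0 < a k) :
    ∃ w : ι → ℝ, (∀ k, 0 < w k) ∧ ∑ k, w k = 1 ∧ ∑ k, w k • x k = midpoint ℝ (x i) (x j) := by
  classical
  obtain ⟨hax, ha0⟩ := mem_affineDependences.1 ha
  obtain ⟨ε, hε, hi, hj⟩ : ∃ ε : ℝ, 0 < ε ∧ 0 < 1 / 2 + ε * a i ∧ 0 < 1 / 2 + ε * a j := by
    have hlim (k : ι) : ∀ᶠ ε : ℝ in nhdsWithin 0 (Set.Ioi 0), 0 < 1 / 2 + ε * a k :=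
      (Continuous.tendsto' (by fun_prop) 0 (1 / 2) (by simp) |>.mono_left
        nhdsWithin_le_nhds).eventually_const_lt (by norm_num)
    have hev : ∀ᶠ ε : ℝ in nhdsWithin 0 (Set.Ioi 0), 0 < ε := self_mem_nhdsWithin
    exact (hev.and ((hlim i).and (hlim j))).exists
  let w : ι → ℝ := (Pi.single i (1 / 2) + Pi.single j (1 / 2)) + ε • a
  have hw : ∀ k, 0 < w k := by
    intro k
    rcases eq_or_ne k i with rfl | hki
    · simpa [w, hij] using hi
    rcases eq_or_ne k j with rfl | hkj
    · simpa [w, hki] using hj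
    · simpa [w, hki, hkj] using mul_pos hε (hpos k hki hkj)
  have hw1 : ∑ k, w k = 1 := by
    have hpair : ∑ k, (Pi.single i (1 / 2) + Pi.single j (1 / 2) : ι → ℝ) k = 1 := by
      simp only [Pi.add_apply, Finset.sum_add_distrib, Finset.univ.sum_pi_single',
        Finset.mem_univ, if_true]
      norm_num
    simp only [w, Pi.add_apply (Pi.single i _ + Pi.single j _), hpair, Finset.sum_add_distrib,
      Pi.smul_apply, ← Finset.smul_sum, ha0, smul_zero, add_zero]
  refine ⟨w, hw, hw1, ?_⟩
  simp [w, add_smul, Finset.sum_add_distrib, mul_smul, ← Finset.smul_sum, hax, Pi.single_apply,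
    ite_smul, midpoint_eq_smul_add]

end PointFamilies

section Topology

variable {ι E : Type*} [AddCommGroup E] [Module ℝ E] [TopologicalSpace E] [T2Space E]
  [IsTopologicalAddGroup E] [ContinuousSMul ℝ E]

lemma extremePoints_convexHull_range [Finite ι] [LocallyConvexSpace ℝ E] {x : ι → E}
    (hx : ConvexIndependent ℝ x) : (convexHull ℝ (Set.range x)).extremePoints ℝ = Set.range x := by
  refine extremePoints_convexHull_subset.antisymm ?_
  rintro _ ⟨i, rfl⟩
  obtain ⟨s, hs⟩ := Set.subset_range_iff_exists_image_eq.1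
    (extremePoints_convexHull_subset (𝕜 := ℝ) (A := Set.range x))
  have hclosed : IsClosed (convexHull ℝ (x '' s)) := (s.toFinite.image x).isClosed_convexHull ℝ
  have hull : convexHull ℝ (x '' s) = convexHull ℝ (Set.range x) := by
    rw [← hclosed.closure_eq, hs]
    exact closure_convexHull_extremePoints ((Set.finite_range x).isCompact_convexHull ℝ)
      (convex_convexHull ℝ _)
  rw [← hs]
  exact Set.mem_image_of_mem x (hx s i (hull ▸ subset_convexHull ℝ _ (Set.mem_range_self i)))

lemma sum_smul_mem_interior_convexHull [Fintype ι] [FiniteDimensional ℝ E]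
    {x : ι → E} (hx : Function.Surjective (homogenization x)) {w : ι → ℝ} (hw : ∀ i, 0 < w i)
    (hw1 : ∑ i, w i = 1) : ∑ i, w i • x i ∈ interior (convexHull ℝ (Set.range x)) := by
  let O : Set (ι → ℝ) := Set.univ.pi fun _ => Set.Ioi 0
  have hO : IsOpen (homogenization x '' O) :=
    (homogenization x).isOpenMap_of_finiteDimensional hx _
      (isOpen_set_pi Set.finite_univ fun _ _ => isOpen_Ioi)
  refine interior_maximal (t := (fun y => (y, (1 : ℝ))) ⁻¹' (homogenization x '' O)) ?_
    (hO.preimage (by fun_prop)) ⟨w, fun i _ => hw i, by rw [homogenization_apply, hw1]⟩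
  rintro y ⟨v, hv, hvy⟩
  rw [homogenization_apply, Prod.mk.injEq] at hvy
  exact mem_convexHull_of_exists_fintype v x (fun i => (hv i trivial).le) hvy.2
    Set.mem_range_self hvy.1

end Topology

section Polytopes

variable {ι : Type*} [Fintype ι] {d : ℕ} {x : ι → Euc d}

lemma isDPolytope_convexHull_range (hx : Function.Surjective (homogenization x)) :
    IsDPolytope (convexHull ℝ (Set.range x)) := by
  have : Nonempty ι := by
    by_contra h
    rw [not_nonempty_iff] at h
    obtain ⟨w, hw⟩ := hx (0, 1)
    simp [homogenization_apply] at hw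
  have hne : (interior (convexHull ℝ (Set.range x))).Nonempty :=
    ⟨_, sum_smul_mem_interior_convexHull hx (w := fun _ => (Fintype.card ι : ℝ)⁻¹)
      (fun _ => by positivity) (by simp)⟩
  refine ⟨⟨_, Set.finite_range x, rfl⟩, ?_⟩
  rw [affineSpan_convexHull]
  exact affineSpan_eq_top_of_nonempty_interior hne

lemma ncard_verts_convexHull_range (hx : ConvexIndependent ℝ x) :
    (verts (convexHull ℝ (Set.range x))).ncard = Fintype.card ι := by
  rw [verts, extremePoints_convexHull_range hx,
    Set.ncard_range_of_injective hx.injective, Nat.card_eq_fintype_card]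

lemma innerDiagonal_of_mem_affineDependences (hspan : Function.Surjective (homogenization x))
    (hx : ConvexIndependent ℝ x) {i j : ι} (hij : i ≠ j) {a : ι → ℝ}
    (ha : a ∈ affineDependences x) (hpos : ∀ k, k ≠ i → k ≠ j → 0 < a k) :
    InnerDiagonal (convexHull ℝ (Set.range x)) (x i) (x j) := by
  have hverts k : x k ∈ verts (convexHull ℝ (Set.range x)) := by
    rw [verts, extremePoints_convexHull_range hx]
    exact Set.mem_range_self k
  obtain ⟨w, hw, hw1, hwx⟩ := exists_pos_sum_smul_eq_midpoint hij ha hpos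
  exact ⟨hverts i, hverts j, hx.injective.ne hij, midpoint ℝ (x i) (x j),
    midpoint_mem_openSegment _ _, hwx ▸ sum_smul_mem_interior_convexHull hspan hw hw1⟩

lemma illuminated_convexHull_range (hspan : Function.Surjective (homogenization x))
    (hx : ConvexIndependent ℝ x)
    (h : ∀ i, ∃ j ≠ i, ∃ a ∈ affineDependences x, ∀ k, k ≠ i → k ≠ j → 0 < a k) :
    Illuminated (convexHull ℝ (Set.range x)) := by
  intro v hv
  obtain ⟨i, rfl⟩ := extremePoints_convexHull_subset hv
  obtain ⟨j, hji, a, ha, hpos⟩ := h i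
  exact ⟨x j, innerDiagonal_of_mem_affineDependences hspan hx hji ha fun k hkj hki =>
    hpos k hki hkj⟩

end Polytopes

section CrossPolytope

variable {d : ℕ}

/-- The vertices `±e₁, …, ±e_d` of the crosspolytope, the sign `+` being encoded by `true`. -/
def crossVertex (d : ℕ) (k : Fin d × Bool) : Euc d :=
  EuclideanSpace.single k.1 (cond k.2 1 (-1))

lemma crossPolytope_eq_convexHull_range :
    crossPolytope d = convexHull ℝ (Set.range (crossVertex d)) := by
  rw [crossPolytope]
  congr 1
  ext y
  have hneg (i : Fin d) : -EuclideanSpace.single i (1 : ℝ) = EuclideanSpace.single i (-1) := by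
    ext j
    simp [apply_ite]
  simp [crossVertex, hneg, eq_comm, or_comm]

lemma sum_smul_crossVertex_apply (w : Fin d × Bool → ℝ) (i : Fin d) :
    (∑ k, w k • crossVertex d k) i = w (i, true) - w (i, false) := by
  simp [crossVertex, Fintype.sum_prod_type, sub_eq_add_neg, Finset.sum_add_distrib,
    Pi.single_apply]

lemma mem_affineDependences_crossVertex {a : Fin d × Bool → ℝ} :
    a ∈ affineDependences (crossVertex d) ↔
      (∀ i, a (i, true) = a (i, false)) ∧ ∑ k, a k = 0 := by
  rw [mem_affineDependences]
  refine and_congr_left fun _ => ?_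
  simp [PiLp.ext_iff, sum_smul_crossVertex_apply, sub_eq_zero]

lemma surjective_homogenization_crossVertex (hd : 1 ≤ d) :
    Function.Surjective (homogenization (crossVertex d)) := by
  rintro ⟨y, t⟩
  refine ⟨fun k => t / (2 * d) + cond k.2 (y k.1 / 2) (-(y k.1 / 2)), ?_⟩
  rw [homogenization_apply, Prod.mk.injEq]
  constructor
  · ext i
    rw [sum_smul_crossVertex_apply]
    simp
  · have hd0 : (d : ℝ) ≠ 0 := by positivity
    have hpair (i : Fin d) : t / (2 * d) + y i / 2 + (t / (2 * d) + -(y i / 2)) = t / d := by ring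
    simp [Fintype.sum_prod_type, hpair, mul_div_cancel₀ _ hd0]

lemma convexIndependent_crossVertex : ConvexIndependent ℝ (crossVertex d) := by
  refine convexIndependent_of_affineDependences fun a ha i hi => ?_
  obtain ⟨hsymm, hsum⟩ := mem_affineDependences_crossVertex.1 ha
  have hanti : a (i.1, !i.2) = a i := by
    obtain ⟨i, _ | _⟩ := i
    exacts [hsymm i, (hsymm i).symm]
  have hnonneg : 0 ≤ a := by
    intro k
    rcases eq_or_ne k i with rfl | hk
    · rw [← hanti]
      exact hi _ (by simp [Prod.ext_iff])
    · exact hi k hk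
  exact (Fintype.sum_eq_zero_iff_of_nonneg hnonneg).1 hsum

lemma isDPolytope_crossPolytope (hd : 1 ≤ d) : IsDPolytope (crossPolytope d) := by
  rw [crossPolytope_eq_convexHull_range]
  exact isDPolytope_convexHull_range (surjective_homogenization_crossVertex hd)

lemma ncard_verts_crossPolytope : (verts (crossPolytope d)).ncard = 2 * d := by
  rw [crossPolytope_eq_convexHull_range, ncard_verts_convexHull_range convexIndependent_crossVertex]
  simp [mul_comm]

lemma illuminated_crossPolytope (hd : 1 ≤ d) : Illuminated (crossPolytope d) := by
  rw [crossPolytope_eq_convexHull_range]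
  refine illuminated_convexHull_range (surjective_homogenization_crossVertex hd)
    convexIndependent_crossVertex ?_
  rintro ⟨i, b⟩
  refine ⟨(i, !b), by simp, fun k => 1 - if k.1 = i then (d : ℝ) else 0, ?_, ?_⟩
  · rw [mem_affineDependences_crossVertex]
    simp [Fintype.sum_prod_type, Finset.sum_add_distrib, mul_two]
  · rintro ⟨j, b'⟩ hne hne'
    have : j ≠ i := by
      rintro rfl
      cases b <;> cases b' <;> simp_all
    simp [this]

end CrossPolytope

section GaleDuality

lemma exists_linearMap_eq_zero_iff_mem {𝕜 V F : Type*} [Field 𝕜] [AddCommGroup V] [Module 𝕜 V]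
    [FiniteDimensional 𝕜 V] [AddCommGroup F] [Module 𝕜 F] [FiniteDimensional 𝕜 F]
    {N K : Submodule 𝕜 V} (hNK : N ≤ K)
    (hrank : Module.finrank 𝕜 N + Module.finrank 𝕜 F = Module.finrank 𝕜 K) :
    ∃ f : V →ₗ[𝕜] F, ∀ a ∈ K, f a = 0 ↔ a ∈ N := by
  let N' : Submodule 𝕜 K := N.comap K.subtype
  have hquot : Module.finrank 𝕜 (K ⧸ N') = Module.finrank 𝕜 F := by
    have hN' : Module.finrank 𝕜 N' = Module.finrank 𝕜 N :=
      (Submodule.comapSubtypeEquivOfLe hNK).finrank_eq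
    have := N'.finrank_quotient_add_finrank
    omega
  let e : (K ⧸ N') ≃ₗ[𝕜] F := LinearEquiv.ofFinrankEq _ _ hquot
  obtain ⟨f, hf⟩ := (e.toLinearMap ∘ₗ N'.mkQ).exists_extend
  refine ⟨f, fun a ha => ?_⟩
  have hfa : f a = e (N'.mkQ ⟨a, ha⟩) := LinearMap.congr_fun hf ⟨a, ha⟩
  rw [hfa, LinearEquiv.map_eq_zero_iff, Submodule.mkQ_apply, Submodule.Quotient.mk_eq_zero,
    Submodule.mem_comap, Submodule.subtype_apply]

variable {ι : Type*} [Fintype ι]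

/-- The linear functional `w ↦ ∑ i, w i` on `ℝ^ι`, whose kernel contains all affine dependences. -/
def sumFunctional (ι : Type*) [Fintype ι] : Module.Dual ℝ (ι → ℝ) := ∑ i, LinearMap.proj i

@[simp] lemma sumFunctional_apply (w : ι → ℝ) : sumFunctional ι w = ∑ i, w i := by
  simp [sumFunctional]

lemma sumFunctional_ne_zero [Nonempty ι] : sumFunctional ι ≠ 0 := by
  classical
  intro h
  simpa using LinearMap.congr_fun h (Pi.single (Classical.arbitrary ι) 1)

lemma finrank_ker_sumFunctional_add_one [Nonempty ι] :
    Module.finrank ℝ (LinearMap.ker (sumFunctional ι)) + 1 = Fintype.card ι := by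
  rw [Module.Dual.finrank_ker_add_one_of_ne_zero sumFunctional_ne_zero,
    Module.finrank_fintype_fun_eq_card]

variable {E : Type*} [AddCommGroup E] [Module ℝ E] [FiniteDimensional ℝ E]

lemma surjective_homogenization_of_finrank_eq {x : ι → E}
    (hx : Module.finrank ℝ (affineDependences x) + Module.finrank ℝ E + 1 = Fintype.card ι) :
    Function.Surjective (homogenization x) := by
  refine LinearMap.range_eq_top.1 (Submodule.eq_top_of_finrank_eq ?_)
  have := (homogenization x).finrank_range_add_finrank_ker
  rw [Module.finrank_fintype_fun_eq_card, ← hx, affineDependences] at this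
  rw [Module.finrank_prod, Module.finrank_self]
  omega

lemma exists_affineDependences_eq [Nonempty ι] {N : Submodule ℝ (ι → ℝ)}
    (hN : ∀ a ∈ N, ∑ i, a i = 0)
    (hcard : Module.finrank ℝ N + Module.finrank ℝ E + 1 = Fintype.card ι) :
    ∃ x : ι → E, affineDependences x = N := by
  classical
  have hNK : N ≤ LinearMap.ker (sumFunctional ι) := fun a ha => by simpa using hN a ha
  have hker := finrank_ker_sumFunctional_add_one (ι := ι)
  obtain ⟨f, hf⟩ := exists_linearMap_eq_zero_iff_mem (F := E) hNK (by omega)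
  have hfa (a : ι → ℝ) : ∑ i, a i • f (Pi.single i 1) = f a := by
    simp_rw [← map_smul, ← map_sum, ← Pi.single_smul, smul_eq_mul, mul_one, Finset.univ_sum_single]
  refine ⟨fun i => f (Pi.single i 1), Submodule.ext fun a => ?_⟩
  rw [mem_affineDependences, hfa]
  exact ⟨fun h => (hf a (by simpa using h.2)).1 h.1, fun ha => ⟨(hf a (hNK ha)).2 ha, hN a ha⟩⟩

theorem exists_illuminated_of_dependences {d : ℕ} {N : Submodule ℝ (ι → ℝ)}
    (hN : ∀ a ∈ N, ∑ i, a i = 0) (hcard : Module.finrank ℝ N + d + 1 = Fintype.card ι)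
    (hconv : ∀ a ∈ N, ∀ i, (∀ j ≠ i, 0 ≤ a j) → a = 0)
    (hdiag : ∀ i, ∃ j ≠ i, ∃ a ∈ N, ∀ k, k ≠ i → k ≠ j → 0 < a k) :
    ∃ P : Set (Euc d), IsDPolytope P ∧ Illuminated P ∧ (verts P).ncard = Fintype.card ι := by
  have : Nonempty ι := Fintype.card_pos_iff.1 (by omega)
  rw [← finrank_euclideanSpace_fin (𝕜 := ℝ) (n := d)] at hcard
  obtain ⟨x, rfl⟩ := exists_affineDependences_eq hN hcard
  have hspan := surjective_homogenization_of_finrank_eq hcard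
  have hx := convexIndependent_of_affineDependences hconv
  exact ⟨convexHull ℝ (Set.range x), isDPolytope_convexHull_range hspan,
    illuminated_convexHull_range hspan hx hdiag, ncard_verts_convexHull_range hx⟩

end GaleDuality

section Stars

variable {I : Type*} [Fintype I]

lemma eq_zero_of_sum_eq_zero_of_bounds {φ : I → ℝ} {S α β : ℝ} (hα : 0 < α) (hβ : 0 < β)
    (hαβ : α < (Fintype.card I - 1) * β) (hφ : ∑ k, φ k = 0) {i : I}
    (hlower : ∀ k ≠ i, S ≤ α * φ k) (hupper : ∀ k, -S ≤ β * φ k) : φ = 0 ∧ S = 0 := by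
  classical
  have hS0 : 0 ≤ S := by
    have hn : (0 : ℝ) < Fintype.card I := Nat.cast_pos.2 (Fintype.card_pos_iff.2 ⟨i⟩)
    have hsum : ∑ _k : I, -S ≤ ∑ k, β * φ k := Finset.sum_le_sum fun k _ => hupper k
    rw [← Finset.mul_sum, hφ, Finset.sum_const, Finset.card_univ, nsmul_eq_mul, mul_zero] at hsum
    exact neg_nonpos.1 (nonpos_of_mul_nonpos_right hsum hn)
  have hrest : (Fintype.card I - 1) * S ≤ α * -φ i := by
    have hsplit := Finset.add_sum_erase Finset.univ φ (Finset.mem_univ i)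
    have := Finset.card_nsmul_le_sum (Finset.univ.erase i) (fun k => α * φ k) S fun k hk =>
      hlower k (Finset.ne_of_mem_erase hk)
    rwa [nsmul_eq_mul, Finset.cast_card_erase_of_mem (Finset.mem_univ i), Finset.card_univ,
      ← Finset.mul_sum, show ∑ k ∈ Finset.univ.erase i, φ k = -φ i by linarith] at this
  have hS : S = 0 := by
    have hprod : ((Fintype.card I - 1) * β - α) * S ≤ 0 := calc
      _ = β * ((Fintype.card I - 1) * S) - α * S := by ring
      _ ≤ β * (α * -φ i) - α * S := by gcongr
      _ = α * (-S - β * φ i) := by ring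
      _ ≤ 0 := mul_nonpos_of_nonneg_of_nonpos hα.le (sub_nonpos.2 (hupper i))
    exact le_antisymm (nonpos_of_mul_nonpos_right hprod (sub_pos.2 hαβ)) hS0
  have hnonneg : 0 ≤ φ := fun k => by
    have := hupper k
    rw [hS, neg_zero] at this
    exact nonneg_of_mul_nonneg_right this hβ
  exact ⟨(Fintype.sum_eq_zero_iff_of_nonneg hnonneg).1 hφ, hS⟩

lemma exists_pred_lt_and_pred_mul_lt {p q : ℝ} (hp : 2 < p) (hq : 0 < q) :
    ∃ t, p - 1 < t ∧ (q - 1) * t < (p - 1) * q - 1 := by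
  have hδ : 0 < (p - 2) / q := by
    apply div_pos <;> linarith
  have hδq : (p - 2) / q * q = p - 2 := div_mul_cancel₀ _ hq.ne'
  exact ⟨p - 1 + (p - 2) / q, by linarith, by nlinarith⟩

variable {L : Type*} [Fintype L] {K : I → Type*} [∀ i, DecidableEq (K i)]

/-- The linear functionals assigned to the vertices of a star forest with one star for each `i : I`,
whose center is `⟨i, none⟩` and whose leaves are `⟨i, some j⟩`. The leaves of each star are indexed
by a quotient `χ i` of a common label set `L`. On the hyperplane `∑ i, φ i = 0` this is the Gale
diagram of an illuminated polytope whose inner diagonals include the edges of the forest. The weight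
of the centers lies below `(|I| - 1) * |L|`, which gives convex position, and above
`(|I| - 1) * (|L| - 1)`, which makes the edges inner diagonals. -/
def starDiagram (χ : ∀ i, L → K i) :
    (I → ℝ) × (L → ℝ) →ₗ[ℝ] (Σ i, Option (K i)) → ℝ :=
  LinearMap.pi fun
    | ⟨i, none⟩ =>
        ((Fintype.card I - 1) * Fintype.card L - 1 : ℝ) •
          (LinearMap.proj i ∘ₗ LinearMap.fst ℝ (I → ℝ) (L → ℝ)) -
        sumFunctional L ∘ₗ LinearMap.snd ℝ (I → ℝ) (L → ℝ)
    | ⟨i, some j⟩ =>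
        ∑ l with χ i l = j, (LinearMap.proj i ∘ₗ LinearMap.fst ℝ (I → ℝ) (L → ℝ) +
          LinearMap.proj l ∘ₗ LinearMap.snd ℝ (I → ℝ) (L → ℝ))

variable {χ : ∀ i, L → K i} {φ : I → ℝ} {ψ : L → ℝ}

lemma starDiagram_center (i : I) :
    starDiagram χ (φ, ψ) ⟨i, none⟩ =
      ((Fintype.card I - 1) * Fintype.card L - 1) * φ i - ∑ l, ψ l := by
  simp [starDiagram]

lemma starDiagram_leaf (i : I) (j : K i) :
    starDiagram χ (φ, ψ) ⟨i, some j⟩ = ∑ l with χ i l = j, (φ i + ψ l) := by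
  simp [starDiagram]

lemma eq_zero_of_starDiagram_leaf_nonneg {i : I} (hi : Function.Injective (χ i))
    (hφ : φ = 0) (hψ : ∑ l, ψ l = 0) (hleaf : ∀ j, 0 ≤ starDiagram χ (φ, ψ) ⟨i, some j⟩) :
    ψ = 0 := by
  have hnonneg : 0 ≤ ψ := by
    intro l
    have hfiber : ({l' | χ i l' = χ i l} : Finset L) = {l} := by
      ext l'
      simp [hi.eq_iff]
    simpa [starDiagram_leaf, hfiber, hφ] using hleaf (χ i l)
  exact (Fintype.sum_eq_zero_iff_of_nonneg hnonneg).1 hψ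

lemma sum_starDiagram_leaf (i : I) [Fintype (K i)] :
    ∑ j, starDiagram χ (φ, ψ) ⟨i, some j⟩ = Fintype.card L * φ i + ∑ l, ψ l := by
  simp_rw [starDiagram_leaf, Finset.sum_fiberwise, Finset.sum_add_distrib]
  simp

lemma neg_sum_le_of_starDiagram_leaf_nonneg {i : I} [Finite (K i)]
    (hleaf : ∀ j, 0 ≤ starDiagram χ (φ, ψ) ⟨i, some j⟩) :
    -∑ l, ψ l ≤ Fintype.card L * φ i := by
  cases nonempty_fintype (K i)
  linarith [sum_starDiagram_leaf (χ := χ) (φ := φ) (ψ := ψ) i,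
    Fintype.sum_nonneg (f := fun j => starDiagram χ (φ, ψ) ⟨i, some j⟩) hleaf]

lemma sum_starDiagram [∀ i, Fintype (K i)] :
    ∑ x, starDiagram χ (φ, ψ) x =
      ((Fintype.card I - 1) * Fintype.card L - 1 + Fintype.card L) * ∑ i, φ i := by
  rw [Fintype.sum_sigma, Finset.mul_sum]
  refine Finset.sum_congr rfl fun i _ => ?_
  rw [Fintype.sum_option, starDiagram_center, sum_starDiagram_leaf]
  ring

/-- The image of the hyperplane `∑ i, φ i = 0` under `starDiagram χ`, which serves as the space of
affine dependences of the vertices of the polytope. -/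
def starDependences (χ : ∀ i, L → K i) : Submodule ℝ ((Σ i, Option (K i)) → ℝ) :=
  (LinearMap.ker (sumFunctional I ∘ₗ LinearMap.fst ℝ (I → ℝ) (L → ℝ))).map (starDiagram χ)

lemma mem_starDependences {a : (Σ i, Option (K i)) → ℝ} :
    a ∈ starDependences χ ↔ ∃ φ ψ, ∑ i, φ i = 0 ∧ starDiagram χ (φ, ψ) = a := by
  simp [starDependences]

lemma exists_mem_starDependences_pos_off_edge (hI : 3 ≤ Fintype.card I)
    (hχ : ∀ i, Function.Surjective (χ i)) (i : I) (j : K i) :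
    ∃ a ∈ starDependences χ, ∀ x, x ≠ ⟨i, none⟩ → x ≠ ⟨i, some j⟩ → 0 < a x := by
  classical
  obtain ⟨l₀, hl₀⟩ := hχ i j
  have hp : (2 : ℝ) < Fintype.card I := by exact_mod_cast hI
  have hq : (1 : ℝ) ≤ Fintype.card L := by
    exact_mod_cast Fintype.card_pos_iff.2 ⟨l₀⟩
  obtain ⟨t, ht, ht'⟩ := exists_pred_lt_and_pred_mul_lt hp (by linarith)
  let φ : I → ℝ := fun k => 1 - if k = i then (Fintype.card I : ℝ) else 0
  let ψ : L → ℝ := fun l => t - if l = l₀ then t else 0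
  have hψ : ∑ l, ψ l = (Fintype.card L - 1) * t := by
    simp only [ψ, Finset.sum_sub_distrib, Fintype.sum_ite_eq', Finset.sum_const, Finset.card_univ,
      nsmul_eq_mul]
    ring
  have hψ0 (l : L) : 0 ≤ ψ l := by
    simp only [ψ]
    split_ifs <;> linarith
  refine ⟨_, mem_starDependences.2 ⟨φ, ψ, by simp [φ], rfl⟩, ?_⟩
  rintro ⟨k, _ | j'⟩ hcenter hleaf
  · have hk : k ≠ i := by
      rintro rfl
      exact hcenter rfl
    rw [starDiagram_center, hψ]
    simp only [φ, hk, if_false]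
    linarith
  · rw [starDiagram_leaf]
    obtain ⟨l₁, hl₁⟩ := hχ k j'
    refine Finset.sum_pos (fun l hl => ?_) ⟨l₁, by simpa using hl₁⟩
    rcases eq_or_ne k i with rfl | hk
    · have hll₀ : l ≠ l₀ := by
        rintro rfl
        rw [Finset.mem_filter_univ, hl₀] at hl
        exact hleaf (hl ▸ rfl)
      simp only [φ, ψ, hll₀, if_true, if_false]
      linarith
    · simp only [φ, hk, if_false]
      linarith [hψ0 l]

section Nonneg

variable [Nonempty L] [∀ i, Finite (K i)]

lemma eq_zero_of_starDiagram_nonneg_off_center (hI : 3 ≤ Fintype.card I)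
    (hχ : ∀ i, ∃ i' ≠ i, Function.Injective (χ i')) (hφ : ∑ i, φ i = 0) {i : I}
    (hnonneg : ∀ x ≠ ⟨i, none⟩, 0 ≤ starDiagram χ (φ, ψ) x) : φ = 0 ∧ ψ = 0 := by
  have hp : (3 : ℝ) ≤ Fintype.card I := by exact_mod_cast hI
  have hq : (1 : ℝ) ≤ Fintype.card L := by exact_mod_cast Fintype.card_pos (α := L)
  have hleaf (k : I) (j : K k) : 0 ≤ starDiagram χ (φ, ψ) ⟨k, some j⟩ := hnonneg _ (by aesop)
  obtain ⟨hφ0, hψ0⟩ := eq_zero_of_sum_eq_zero_of_bounds (S := ∑ l, ψ l) (i := i)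
    (α := (Fintype.card I - 1) * Fintype.card L - 1) (β := Fintype.card L)
    (by nlinarith) (by linarith) (by linarith) hφ
    (fun k hk => by
      have := hnonneg ⟨k, none⟩ (by aesop)
      rw [starDiagram_center] at this
      linarith)
    (fun k => neg_sum_le_of_starDiagram_leaf_nonneg (hleaf k))
  obtain ⟨i', -, hi'⟩ := hχ i
  exact ⟨hφ0, eq_zero_of_starDiagram_leaf_nonneg hi' hφ0 hψ0 (hleaf i')⟩

lemma eq_zero_of_starDiagram_nonneg_off_leaf (hI : 3 ≤ Fintype.card I)
    (hχ : ∀ i, ∃ i' ≠ i, Function.Injective (χ i')) (hφ : ∑ i, φ i = 0) {i : I} {j : K i}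
    (hnonneg : ∀ x ≠ ⟨i, some j⟩, 0 ≤ starDiagram χ (φ, ψ) x) : φ = 0 ∧ ψ = 0 := by
  have hp : (3 : ℝ) ≤ Fintype.card I := by exact_mod_cast hI
  have hq : (1 : ℝ) ≤ Fintype.card L := by exact_mod_cast Fintype.card_pos (α := L)
  have hleaf (k : I) (hk : k ≠ i) (j : K k) : 0 ≤ starDiagram χ (φ, ψ) ⟨k, some j⟩ :=
    hnonneg _ (by aesop)
  have hβ : 2 * (Fintype.card L : ℝ) - 1 ≤ (Fintype.card I - 1) * Fintype.card L - 1 := by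
    nlinarith
  obtain ⟨hφ0, hψ0⟩ := eq_zero_of_sum_eq_zero_of_bounds (S := -∑ l, ψ l) (i := i)
    (α := Fintype.card L) (β := (Fintype.card I - 1) * Fintype.card L - 1)
    (by linarith) (by linarith) (by nlinarith) hφ
    (fun k hk => neg_sum_le_of_starDiagram_leaf_nonneg (hleaf k hk))
    (fun k => by
      have := hnonneg ⟨k, none⟩ (by aesop)
      rw [starDiagram_center] at this
      linarith)
  obtain ⟨i', hne, hi'⟩ := hχ i
  exact ⟨hφ0, eq_zero_of_starDiagram_leaf_nonneg hi' hφ0 (neg_eq_zero.1 hψ0) (hleaf i' hne)⟩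

lemma starDiagram_injective (hI : 3 ≤ Fintype.card I)
    (hχ : ∀ i, ∃ i' ≠ i, Function.Injective (χ i')) : Function.Injective (starDiagram χ) := by
  have hp : (3 : ℝ) ≤ Fintype.card I := by exact_mod_cast hI
  have hq : (1 : ℝ) ≤ Fintype.card L := by exact_mod_cast Fintype.card_pos (α := L)
  have (i : I) : Fintype (K i) := Fintype.ofFinite (K i)
  obtain ⟨i⟩ : Nonempty I := Fintype.card_pos_iff.1 (by omega)
  rw [injective_iff_map_eq_zero]
  rintro ⟨φ, ψ⟩ hzero
  have hsum := sum_starDiagram (χ := χ) (φ := φ) (ψ := ψ)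
  simp only [hzero, Pi.zero_apply, Finset.sum_const_zero, zero_eq_mul] at hsum
  have hφ : ∑ i, φ i = 0 := hsum.resolve_left (by nlinarith)
  exact Prod.mk_eq_zero.2 (eq_zero_of_starDiagram_nonneg_off_center hI hχ hφ (i := i)
    fun x _ => (congrFun hzero x).ge)

lemma finrank_starDependences_add_one (hI : 3 ≤ Fintype.card I)
    (hχ : ∀ i, ∃ i' ≠ i, Function.Injective (χ i')) :
    Module.finrank ℝ (starDependences χ) + 1 = Fintype.card I + Fintype.card L := by
  have : Nonempty I := Fintype.card_pos_iff.1 (by omega)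
  have hne : sumFunctional I ∘ₗ LinearMap.fst ℝ (I → ℝ) (L → ℝ) ≠ 0 :=
    (LinearMap.cancel_right LinearMap.fst_surjective).ne.2 sumFunctional_ne_zero
  rw [starDependences,
    ← (Submodule.equivMapOfInjective _ (starDiagram_injective hI hχ) _).finrank_eq,
    Module.Dual.finrank_ker_add_one_of_ne_zero hne, Module.finrank_prod,
    Module.finrank_fintype_fun_eq_card, Module.finrank_fintype_fun_eq_card]

lemma eq_zero_of_mem_starDependences (hI : 3 ≤ Fintype.card I)
    (hχ : ∀ i, ∃ i' ≠ i, Function.Injective (χ i')) {a : (Σ i, Option (K i)) → ℝ}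
    (ha : a ∈ starDependences χ) {x : Σ i, Option (K i)} (hnonneg : ∀ y ≠ x, 0 ≤ a y) : a = 0 := by
  obtain ⟨φ, ψ, hφ, rfl⟩ := mem_starDependences.1 ha
  obtain ⟨rfl, rfl⟩ : φ = 0 ∧ ψ = 0 := by
    obtain ⟨i, _ | j⟩ := x
    · exact eq_zero_of_starDiagram_nonneg_off_center hI hχ hφ hnonneg
    · exact eq_zero_of_starDiagram_nonneg_off_leaf hI hχ hφ hnonneg
  exact map_zero _

end Nonneg

end Stars

section StarForests

variable {I : Type*} [Fintype I]

theorem exists_illuminated_of_surjective_of_injective {L : Type*} [Fintype L] [Nonempty L]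
    {K : I → Type*} [∀ i, Fintype (K i)] {χ : ∀ i, L → K i} {d : ℕ} (hI : 3 ≤ Fintype.card I)
    (hsurj : ∀ i, Function.Surjective (χ i)) (hinj : ∀ i, ∃ i' ≠ i, Function.Injective (χ i'))
    (hd : d + Fintype.card L = ∑ i, Fintype.card (K i)) :
    ∃ P : Set (Euc d), IsDPolytope P ∧ Illuminated P ∧
      (verts P).ncard = d + Fintype.card L + Fintype.card I := by
  classical
  have hcard : Fintype.card (Σ i, Option (K i)) = d + Fintype.card L + Fintype.card I := by
    rw [hd, Fintype.card_sigma]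
    simp [Finset.sum_add_distrib]
  have hrank : Module.finrank ℝ (starDependences χ) + d + 1 =
      Fintype.card (Σ i, Option (K i)) := by
    have := finrank_starDependences_add_one hI hinj
    omega
  rw [← hcard]
  refine exists_illuminated_of_dependences (fun a ha => ?_) hrank
    (fun a ha x => eq_zero_of_mem_starDependences hI hinj ha) ?_
  · obtain ⟨φ, ψ, hφ, rfl⟩ := mem_starDependences.1 ha
    rw [sum_starDiagram, hφ, mul_zero]
  · rintro ⟨i, _ | j⟩
    · obtain ⟨j⟩ : Nonempty (K i) := Nonempty.map (χ i) inferInstance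
      obtain ⟨a, ha, hpos⟩ := exists_mem_starDependences_pos_off_edge hI hsurj i j
      exact ⟨⟨i, some j⟩, by simp, a, ha, hpos⟩
    · obtain ⟨a, ha, hpos⟩ := exists_mem_starDependences_pos_off_edge hI hsurj i j
      exact ⟨⟨i, none⟩, by simp, a, ha, fun x hx hx' => hpos x hx' hx⟩

theorem exists_illuminated_of_star_sizes {d q : ℕ} {k : I → ℕ} (hI : 3 ≤ Fintype.card I)
    (hk : ∀ i, 0 < k i ∧ k i ≤ q) (hq : ∀ i, ∃ i' ≠ i, k i' = q) (hd : d + q = ∑ i, k i) :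
    ∃ P : Set (Euc d), IsDPolytope P ∧ Illuminated P ∧
      (verts P).ncard = d + q + Fintype.card I := by
  obtain ⟨i⟩ : Nonempty I := Fintype.card_pos_iff.1 (by omega)
  have : Nonempty (Fin q) := ⟨⟨0, (hk i).1.trans_le (hk i).2⟩⟩
  have hsurj (i : I) : ∃ χ : Fin q → Fin (k i), Function.Surjective χ := by
    have : Nonempty (Fin (k i)) := ⟨⟨0, (hk i).1⟩⟩
    exact ⟨_, Function.invFun_surjective (Fin.castLE_injective (hk i).2)⟩
  choose χ hχ using hsurj
  have hinj (i : I) : ∃ i' ≠ i, Function.Injective (χ i') := by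
    obtain ⟨i', hne, hi'⟩ := hq i
    exact ⟨i', hne, ((hχ i').bijective_of_nat_card_le (by simp [hi'])).injective⟩
  simpa using exists_illuminated_of_surjective_of_injective hI hχ hinj (by simpa using hd)

lemma exists_illuminated_of_add_eq_add_mul {d p q g : ℕ} (hp : 2 ≤ p) (hg : 0 < g) (hgq : g ≤ q)
    (hd : d + q = g + p * q) :
    ∃ P : Set (Euc d), IsDPolytope P ∧ Illuminated P ∧ (verts P).ncard = d + p + q + 1 := by
  let k : Fin (p + 1) → ℕ := Fin.cons g fun _ => q
  have hk : ∀ i, 0 < k i ∧ k i ≤ q := Fin.cases ⟨hg, hgq⟩ fun _ => ⟨hg.trans_le hgq, le_rfl⟩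
  have hq (i : Fin (p + 1)) : ∃ i' ≠ i, k i' = q := by
    obtain ⟨i', hi', hne⟩ := Fin.exists_ne_and_ne_of_two_lt 0 i (by omega)
    obtain ⟨j, rfl⟩ := Fin.exists_succ_eq_of_ne_zero hi'
    exact ⟨j.succ, hne, rfl⟩
  have hsum : d + q = ∑ i, k i := by simp [k, Fin.sum_univ_succ, hd]
  obtain ⟨P, hP, hill, hcard⟩ := exists_illuminated_of_star_sizes (by simpa using hp) hk hq hsum
  exact ⟨P, hP, hill, by rw [hcard, Fintype.card_fin]; ring⟩

end StarForests

section ManiNumber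

variable {d : ℕ}

lemma pf_pos (hd : 1 ≤ d) : 0 < pf d := by
  have hd' : (1 : ℝ) ≤ d := by exact_mod_cast hd
  have : 1 < Real.sqrt (4 * d + 1) := by
    rw [Real.lt_sqrt] <;> linarith
  rw [pf, Nat.ceil_pos]
  linarith

lemma pf_mul_pred_lt (hd : 1 ≤ d) : pf d * (pf d - 1) < d := by
  have hp : 1 ≤ pf d := pf_pos hd
  have hp' : (1 : ℝ) ≤ pf d := by exact_mod_cast hp
  have hlt : (pf d : ℝ) - 1 < (Real.sqrt (4 * d + 1) - 1) / 2 :=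
    sub_lt_iff_lt_add.2 (Nat.ceil_lt_add_one (by
      have : 1 ≤ Real.sqrt (4 * d + 1) := Real.one_le_sqrt.2 (by linarith [d.cast_nonneg (α := ℝ)])
      linarith))
  have hsq := Real.sq_sqrt (show (0 : ℝ) ≤ 4 * d + 1 by positivity)
  rify [hp]
  nlinarith

lemma le_mul_ceil_div {p : ℕ} (hp : 0 < p) : d ≤ p * ⌈(d : ℝ) / p⌉₊ := by
  have hp' : (0 : ℝ) < p := by exact_mod_cast hp
  have := (div_le_iff₀' hp').1 (Nat.le_ceil ((d : ℝ) / p))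
  exact_mod_cast this

lemma mul_ceil_div_lt {p : ℕ} (hp : 0 < p) : p * ⌈(d : ℝ) / p⌉₊ < d + p := by
  have hp' : (0 : ℝ) < p := by exact_mod_cast hp
  have := mul_lt_mul_of_pos_left (Nat.ceil_lt_add_one (a := (d : ℝ) / p) (by positivity)) hp'
  rw [mul_add, mul_div_cancel₀ _ hp'.ne', mul_one] at this
  exact_mod_cast this

lemma exists_add_ceil_div_eq {p : ℕ} (hp : 0 < p) (hpd : p * (p - 1) < d) :
    ∃ g, 0 < g ∧ g ≤ ⌈(d : ℝ) / p⌉₊ ∧ d + ⌈(d : ℝ) / p⌉₊ = g + p * ⌈(d : ℝ) / p⌉₊ := by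
  have hle := le_mul_ceil_div (d := d) hp
  have hlt := mul_ceil_div_lt (d := d) hp
  have hpq : p - 1 < ⌈(d : ℝ) / p⌉₊ := lt_of_mul_lt_mul_left' (hpd.trans_le hle)
  exact ⟨d + ⌈(d : ℝ) / p⌉₊ - p * ⌈(d : ℝ) / p⌉₊, by omega, by omega, by omega⟩

lemma two_le_pf_of_lt (hd : 1 ≤ d) (h : d + pf d + ⌈(d : ℝ) / pf d⌉₊ + 1 < 2 * d) : 2 ≤ pf d := by
  have hpos := pf_pos hd
  by_contra hlt
  have hp : pf d = 1 := by omega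
  rw [hp, Nat.cast_one, div_one, Nat.ceil_natCast] at h
  omega

end ManiNumber

/-- For every `d ≥ 1` there is an illuminated `d`-polytope with
exactly `M(d)` vertices. -/
theorem exists_illuminated_card_M {d : ℕ} (hd : 1 ≤ d) :
    ∃ P : Set (Euc d), IsDPolytope P ∧ Illuminated P ∧ (verts P).ncard = Mf d := by
  rcases le_or_gt (2 * d) (d + pf d + ⌈(d : ℝ) / pf d⌉₊ + 1) with h | h
  · rw [Mf, min_eq_left h]
    exact ⟨crossPolytope d, isDPolytope_crossPolytope hd, illuminated_crossPolytope hd,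
      ncard_verts_crossPolytope⟩
  rw [Mf, min_eq_right h.le]
  obtain ⟨g, hg, hgq, hsum⟩ := exists_add_ceil_div_eq (pf_pos hd) (pf_mul_pred_lt hd)
  exact exists_illuminated_of_add_eq_add_mul (two_le_pf_of_lt hd h) hg hgq hsum
end
end
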